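/- arXiv:math/9310213 — 3 statements merged into one kernel-verified Lean document; each statement's English description precedes it below -/
import Mathlib

section
/- (Padding coherence.) Let L be a first-order language, M a nonempty L-structure, U an ultrafilter on a nonempty set I, and r ≤ q natural numbers. For F : I^r → M let pad F : I^q → M be defined by (pad F)(i₁,…,i_q) = F(i₁,…,i_r). Then for every L-formula φ with n free variables and every tuple F₁, …, Fₙ : I^r → M, the ultraproduct of the constant family (fun _ => M) over I^r with respect to U^[r] realizes φ at [F₁], …, [Fₙ] if and only if the ultraproduct over I^q with respect to U^[q] realizes φ at [pad F₁], …, [pad Fₙ]. -/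
open FirstOrder Filter

/-- The iterated ultrafilter quantifier `U i_r, U i_{r-1}, …, U i_1, φ (i₁, …, i_r)`,
interpreted innermost-first. -/
def UIter {I : Type*} (U : Ultrafilter I) : (r : ℕ) → ((Fin r → I) → Prop) → Prop
  | 0, φ => φ (fun i => i.elim0)
  | r + 1, φ => {j : I | UIter U r (fun t => φ (Fin.snoc t j))} ∈ U

/-- Padding a function `F : I^r → M` to a function `I^q → M` (for `r ≤ q`) by ignoring the
extra coordinates: `(pad F)(i₁,…,i_q) = F(i₁,…,i_r)`. -/
def pad {I M : Type*} {r q : ℕ} (h : r ≤ q) (F : (Fin r → I) → M) : (Fin q → I) → M :=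
  fun t => F fun k => t (Fin.castLE h k)

/-! Forgetting the last coordinate pushes `U^[r+1]` forward to `U^[r]`, because the outermost
quantifier `U i_{r+1}` then ranges over a condition that does not depend on `i_{r+1}`. By Łoś's
theorem, precomposition with a map `f` preserves and reflects truth between the ultraproduct along
the pushforward by `f` and the ultraproduct along the original ultrafilter. -/

section FubiniPower

variable {I : Type*} (U : Ultrafilter I)

theorem uIter_succ_init_iff {r : ℕ} (P : (Fin r → I) → Prop) :
    UIter U (r + 1) (fun t => P (Fin.init t)) ↔ UIter U r P := by
  simp only [UIter, Fin.init_snoc]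
  exact eventually_const (f := (U : Filter I))

theorem uIter_take_iff {r q : ℕ} (h : r ≤ q) (P : (Fin r → I) → Prop) :
    UIter U q (fun t => P (Fin.take r h t)) ↔ UIter U r P := by
  induction q, h using Nat.le_induction with
  | base => rfl
  | succ q hq ih => exact (uIter_succ_init_iff U fun t => P (Fin.take r hq t)).trans ih

theorem map_take_eq_of_mem_iff_uIter {r q : ℕ} (h : r ≤ q)
    {Vr : Ultrafilter (Fin r → I)} (hVr : ∀ A, A ∈ Vr ↔ UIter U r (· ∈ A))
    {Vq : Ultrafilter (Fin q → I)} (hVq : ∀ A, A ∈ Vq ↔ UIter U q (· ∈ A)) :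
    Vq.map (Fin.take r h) = Vr := by
  ext A
  rw [Ultrafilter.mem_map, hVq, hVr]
  exact uIter_take_iff U h (· ∈ A)

end FubiniPower

section Ultraproduct

variable {L : FirstOrder.Language} {ι : Type*}

theorem realize_ultraproduct_map_iff {α β : Type*} (V : Ultrafilter β) (f : β → α)
    {N : α → Type*} [∀ a, L.Structure (N a)] [∀ a, Nonempty (N a)]
    (φ : L.Formula ι) (F : ι → ∀ a, N a) :
    (φ.Realize fun k => (F k : (V.map f : Filter α).Product N)) ↔
      φ.Realize fun k => ((fun b => F k (f b)) : (V : Filter β).Product fun b => N (f b)) := by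
  have realize_map := Language.Ultraproduct.realize_formula_cast (u := V.map f) φ F
  have realize_comp := Language.Ultraproduct.realize_formula_cast (u := V) φ fun k b => F k (f b)
  exact realize_map.trans realize_comp.symm

theorem padding_coherence_general {I : Type*} (U : Ultrafilter I) {r q : ℕ} (h : r ≤ q)
    {Vr : Ultrafilter (Fin r → I)} (hVr : ∀ A, A ∈ Vr ↔ UIter U r (· ∈ A))
    {Vq : Ultrafilter (Fin q → I)} (hVq : ∀ A, A ∈ Vq ↔ UIter U q (· ∈ A))
    {N : (Fin r → I) → Type*} [∀ s, L.Structure (N s)] [∀ s, Nonempty (N s)]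
    (φ : L.Formula ι) (F : ι → ∀ s, N s) :
    (φ.Realize fun k => (F k : (Vr : Filter (Fin r → I)).Product N)) ↔
      φ.Realize fun k => ((fun t : Fin q → I => F k (Fin.take r h t)) :
        (Vq : Filter (Fin q → I)).Product fun t => N (Fin.take r h t)) := by
  obtain rfl := map_take_eq_of_mem_iff_uIter U h hVr hVq
  exact realize_ultraproduct_map_iff Vq (Fin.take r h) φ F

end Ultraproduct

/-- **Padding coherence.** Let `M` be a nonempty `L`-structure, `U` an ultrafilter on a
nonempty set `I`, and `r ≤ q`.  Let `Vr = U^[r]` and `Vq = U^[q]` be the Fubini powers of `U`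
(characterized by the iterated-quantifier membership condition).  Then for every `L`-formula
`φ` with `n` free variables and all `F₁, …, Fₙ : I^r → M`, the ultraproduct of the constant
family over `I^r` with respect to `U^[r]` realizes `φ` at `[F₁], …, [Fₙ]` if and only if the
ultraproduct over `I^q` with respect to `U^[q]` realizes `φ` at `[pad F₁], …, [pad Fₙ]`. -/
theorem padding_coherence {L : FirstOrder.Language} {M : Type*} [L.Structure M]
    [Nonempty M] {I : Type*} [Nonempty I] (U : Ultrafilter I) {r q : ℕ} (h : r ≤ q)
    (Vr : Ultrafilter (Fin r → I))
    (hVr : ∀ A : Set (Fin r → I), A ∈ Vr ↔ UIter U r (· ∈ A))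
    (Vq : Ultrafilter (Fin q → I))
    (hVq : ∀ A : Set (Fin q → I), A ∈ Vq ↔ UIter U q (· ∈ A))
    {n : ℕ} (φ : L.Formula (Fin n)) (F : Fin n → (Fin r → I) → M) :
    (φ.Realize fun k => (F k : (Vr : Filter (Fin r → I)).Product fun _ => M)) ↔
      (φ.Realize fun k => (pad h (F k) : (Vq : Filter (Fin q → I)).Product fun _ => M)) :=
  padding_coherence_general U h hVr hVq φ F
end

section
/- (Idealization for fine ultrafilters.) Let α and β be types with β nonempty, let U be a fine ultrafilter on Finset α, and let φ : β → α → Prop be any binary relation. Then the following are equivalent: (1) for every finite subset A : Finset α there exists x : β such that φ x a holds for all a ∈ A; (2) there exists a function f : Finset α → β such that for every a : α, the set {i : Finset α | φ (f i) a} belongs to U. -/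
section Idealization

variable {α β ι : Type*} {l : Filter ι} {φ : β → α → Prop}

theorem exists_forall_eventually_of_forall_finset {s : ι → Finset α}
    (hs : ∀ a, ∀ᶠ i in l, a ∈ s i) (hφ : ∀ A : Finset α, ∃ x, ∀ a ∈ A, φ x a) :
    ∃ f : ι → β, ∀ a, ∀ᶠ i in l, φ (f i) a := by
  choose x hx using hφ
  exact ⟨fun i ↦ x (s i), fun a ↦ (hs a).mono fun i ↦ hx (s i) a⟩

theorem exists_forall_mem_finset_of_forall_eventually [l.NeBot] {f : ι → β}
    (hf : ∀ a, ∀ᶠ i in l, φ (f i) a) (A : Finset α) : ∃ x, ∀ a ∈ A, φ x a := by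
  have hA : ∀ᶠ i in l, ∀ a ∈ A, φ (f i) a :=
    (Filter.eventually_all_finset A).2 fun a _ ↦ hf a
  obtain ⟨i, hi⟩ := hA.exists
  exact ⟨f i, hi⟩

-- For an ultrafilter `l` and infinite `α`, a map `s` as in `hs` exists iff `l` is `#α`-regular;
-- fineness is the case `s = id`.
theorem idealization_fine_ultrafilter_general [l.NeBot] {s : ι → Finset α}
    (hs : ∀ a, ∀ᶠ i in l, a ∈ s i) (φ : β → α → Prop) :
    (∀ A : Finset α, ∃ x, ∀ a ∈ A, φ x a) ↔ ∃ f : ι → β, ∀ a, ∀ᶠ i in l, φ (f i) a :=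
  ⟨exists_forall_eventually_of_forall_finset hs,
    fun ⟨_, hf⟩ ↦ exists_forall_mem_finset_of_forall_eventually hf⟩

end Idealization

/-- **Idealization for fine ultrafilters.** Let `β` be nonempty, let `U` be a fine
ultrafilter on `Finset α` (i.e. `{i | a ∈ i} ∈ U` for every `a : α`), and let
`φ : β → α → Prop`.  Then: for every finite set `A : Finset α` there is an `x : β` with
`φ x a` for all `a ∈ A`, if and only if there is a function `f : Finset α → β` such that for
every `a : α` the set `{i : Finset α | φ (f i) a}` belongs to `U`. -/
theorem idealization_fine_ultrafilter {α β : Type*} [Nonempty β]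
    (U : Ultrafilter (Finset α)) (hU : ∀ a : α, {i : Finset α | a ∈ i} ∈ U)
    (φ : β → α → Prop) :
    (∀ A : Finset α, ∃ x : β, ∀ a ∈ A, φ x a) ↔
      ∃ f : Finset α → β, ∀ a : α, {i : Finset α | φ (f i) a} ∈ U :=
  idealization_fine_ultrafilter_general (s := id) hU φ
end

section
/- (Definable existential witnesses.) Let L be a first-order language and M a nonempty L-structure admitting a binary relation W ⊆ M × M that well-orders M and whose graph is definable in M without parameters. Let A ⊆ M be a subset definable in M without parameters. Let φ be an L-formula with free variables x, y₁, …, yₙ, and let f₁, …, fₙ : A → M be functions whose graphs {(a, fₖ a) | a ∈ A} ⊆ M × M are definable in M with parameters. Then there exists a function g : A → M whose graph is definable in M with parameters such that for every a ∈ A, if there exists x : M with M realizing φ at (x, f₁ a, …, fₙ a), then M realizes φ at (g a, f₁ a, …, fₙ a). -/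
open FirstOrder

/-! Call `x` a good witness at `a` if `φ (y, f a) → φ (x, f a)` for every `y`. Unlike a witness of
`φ (x, f a)`, a good witness always exists, so `g a` can be taken to be the `W`-least one; being
`W`-least is first-order expressible, and minimality determines `g a` uniquely, so the formula
expressing it defines the graph of `g`. -/

section

variable {L : FirstOrder.Language} {M : Type*} [L.Structure M] {B : Set M} {α β ι : Type*}

theorem definable_setOf_imp {p q : (α → M) → Prop} (hp : B.Definable L {v | p v})
    (hq : B.Definable L {v | q v}) : B.Definable L {v | p v → q v} := by
  convert! hp.compl.union hq using 1
  ext v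
  exact imp_iff_not_or

theorem definable_setOf_forall {P : (α → M) → M → Prop}
    (hP : B.Definable L {w : Option α → M | P (w ∘ some) (w none)}) :
    B.Definable L {v : α → M | ∀ y, P v y} := by
  have hSum : B.Definable L {w : α ⊕ Unit → M | P (w ∘ Sum.inl) (w (Sum.inr ()))} :=
    hP.preimage_comp fun i : Option α => i.elim (Sum.inr ()) Sum.inl
  convert! hSum.forall_of_finite using 1
  ext v
  exact (Equiv.funUnique Unit M).symm.forall_congr_left

variable (L B) in
/-- A function on a subset `A` of a Cartesian power of `M` is definable over `B` if its graph is.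
This is the analogue of `Set.DefinableFun` for functions that are not defined everywhere; as there,
the coordinate `none` of the graph holds the value. -/
def DefinableFunOn {A : Set (α → M)} (f : A → M) : Prop :=
  B.Definable L {w : Option α → M | ∃ h : w ∘ some ∈ A, f ⟨w ∘ some, h⟩ = w none}

theorem DefinableFunOn.preimage_comp {A : Set (α → M)} {f : A → M} (hf : DefinableFunOn L B f)
    (c : α → β) :
    DefinableFunOn L B fun v : {v : β → M | v ∘ c ∈ A} => f ⟨v.1 ∘ c, v.2⟩ :=
  Set.Definable.preimage_comp (Option.map c) hf

theorem definableFunOn_of_definable_unary_graph {A : Set M} {f : A → M}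
    (hf : B.Definable L {v : Fin 2 → M | ∃ h : v 0 ∈ A, f ⟨v 0, h⟩ = v 1}) :
    DefinableFunOn L B fun u : {u : Fin 1 → M | u 0 ∈ A} => f ⟨u.1 0, u.2⟩ :=
  hf.preimage_comp ![some 0, none]

theorem DefinableFunOn.definable_unary_graph {A : Set M} {g : {u : Fin 1 → M | u 0 ∈ A} → M}
    (hg : DefinableFunOn L B g) :
    B.Definable L {v : Fin 2 → M | ∃ h : v 0 ∈ A, g ⟨fun _ => v 0, h⟩ = v 1} :=
  Set.Definable.preimage_comp (fun i : Option (Fin 1) => i.elim 1 fun _ => 0) hg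

theorem definable_setOf_sumElim_mem [Finite ι] {A : Set (α → M)} (hA : B.Definable L A)
    {f : ι → A → M} (hf : ∀ k, DefinableFunOn L B (f k)) {S : Set (α ⊕ ι → M)}
    (hS : B.Definable L S) :
    B.Definable L {v | ∃ h : v ∈ A, Sum.elim v (fun k => f k ⟨v, h⟩) ∈ S} := by
  have hgraph (k : ι) : B.Definable L {w : α ⊕ ι → M |
      ∃ h : w ∘ Sum.inl ∈ A, f k ⟨w ∘ Sum.inl, h⟩ = w (Sum.inr k)} :=
    Set.Definable.preimage_comp (fun i : Option α => i.elim (Sum.inr k) Sum.inl) (hf k)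
  convert! hA.inter ((Set.definable_iInter_of_finite hgraph).inter hS).exists_of_finite using 1
  ext v
  simp only [Set.mem_inter_iff, Set.mem_iInter, Set.mem_ofPred_eq]
  constructor
  · rintro ⟨hv, hmem⟩
    exact ⟨hv, _, fun k => ⟨hv, rfl⟩, hmem⟩
  · rintro ⟨hv, u, hu, hmem⟩
    obtain rfl : (fun k => f k ⟨v, hv⟩) = u := funext fun k => (hu k).2
    exact ⟨hv, hmem⟩

theorem definable_setOf_cons_mem {n : ℕ} {A : Set (α → M)} (hA : B.Definable L A)
    {f : Fin n → A → M} (hf : ∀ k, DefinableFunOn L B (f k)) {S : Set (Fin (n + 1) → M)}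
    (hS : B.Definable L S) :
    B.Definable L {w : Option α → M |
      ∃ h : w ∘ some ∈ A, (Fin.cons (w none) fun k => f k ⟨w ∘ some, h⟩) ∈ S} := by
  have hcons := definable_setOf_sumElim_mem (hA.preimage_comp some)
    (fun k => (hf k).preimage_comp some)
    (hS.preimage_comp (Fin.cons (Sum.inl none) Sum.inr : Fin (n + 1) → Option α ⊕ Fin n))
  simpa only [Set.mem_preimage, Fin.comp_cons, Sum.elim_inl, Sum.elim_comp_inr] using! hcons

theorem definable_setOf_forall_cons_tail_mem_imp {n : ℕ} {S : Set (Fin (n + 1) → M)}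
    (hS : B.Definable L S) :
    B.Definable L {u : Fin (n + 1) → M | ∀ y, Fin.cons y (Fin.tail u) ∈ S → u ∈ S} := by
  have hcons : B.Definable L
      {w : Option (Fin (n + 1)) → M | Fin.cons (w none) (Fin.tail (w ∘ some)) ∈ S} := by
    simpa only [Set.preimage, Fin.comp_cons] using!
      hS.preimage_comp (Fin.cons none (some ∘ Fin.succ) : Fin (n + 1) → Option (Fin (n + 1)))
  exact definable_setOf_forall (definable_setOf_imp hcons (hS.preimage_comp some))

theorem wellFounded_min_eq_iff {r : α → α → Prop} [Std.Trichotomous r] (hr : WellFounded r)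
    {s : Set α} (hs : s.Nonempty) {x : α} : hr.min s hs = x ↔ x ∈ s ∧ ∀ y ∈ s, ¬ r y x := by
  constructor
  · rintro rfl
    exact ⟨hr.min_mem s hs, fun y hy => hr.not_lt_min s hy⟩
  · rintro ⟨hx, hmin⟩
    exact hr.min_eq_of_forall_not_lt hx hmin

theorem exists_definableFunOn_forall_rel {W : M → M → Prop} [IsWellOrder M W]
    (hW : B.Definable L {v : Fin 2 → M | W (v 0) (v 1)}) {A : Set (α → M)} {R : A → M → Prop}
    (hR : B.Definable L {w : Option α → M | ∃ h : w ∘ some ∈ A, R ⟨w ∘ some, h⟩ (w none)})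
    (hRtotal : ∀ a, ∃ x, R a x) :
    ∃ g : A → M, DefinableFunOn L B g ∧ ∀ a, R a (g a) := by
  have hwf : WellFounded W := IsWellFounded.wf
  refine ⟨fun a => hwf.min {x | R a x} (hRtotal a), ?_, fun a => hwf.min_mem _ (hRtotal a)⟩
  have hminimal : B.Definable L {w : Option α → M |
      ∀ y, (∃ h : w ∘ some ∈ A, R ⟨w ∘ some, h⟩ y) → ¬ W y (w none)} :=
    definable_setOf_forall <| definable_setOf_imp
      (hR.preimage_comp fun i : Option α => i.elim none (some ∘ some))
      (hW.preimage_comp ![none, some none]).compl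
  rw [DefinableFunOn]
  convert! hR.inter hminimal using 1
  ext w
  constructor
  · rintro ⟨hw, hmin⟩
    obtain ⟨hmem, hle⟩ := (wellFounded_min_eq_iff hwf _).1 hmin
    exact ⟨⟨hw, hmem⟩, fun y ⟨_, hy⟩ => hle y hy⟩
  · rintro ⟨⟨hw, hmem⟩, hle⟩
    exact ⟨hw, (wellFounded_min_eq_iff hwf _).2 ⟨hmem, fun y hy => hle y ⟨hw, hy⟩⟩⟩

theorem definable_existential_witness_general [Nonempty M] {W : M → M → Prop} [IsWellOrder M W]
    (hW : B.Definable L {v : Fin 2 → M | W (v 0) (v 1)}) {A : Set (α → M)}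
    (hA : B.Definable L A) {n : ℕ} {S : Set (Fin (n + 1) → M)} (hS : B.Definable L S)
    {f : Fin n → A → M} (hf : ∀ k, DefinableFunOn L B (f k)) :
    ∃ g : A → M, DefinableFunOn L B g ∧
      ∀ a : A, (∃ x : M, (Fin.cons x fun k => f k a) ∈ S) →
        (Fin.cons (g a) fun k => f k a) ∈ S := by
  let Good (a : A) (x : M) : Prop :=
    ∀ y, (Fin.cons y fun k => f k a) ∈ S → (Fin.cons x fun k => f k a) ∈ S
  have hGood : B.Definable L
      {w : Option α → M | ∃ h : w ∘ some ∈ A, Good ⟨w ∘ some, h⟩ (w none)} :=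
    definable_setOf_cons_mem hA hf (definable_setOf_forall_cons_tail_mem_imp hS)
  have hexists (a : A) : ∃ x, Good a x := by
    by_cases hx : ∃ x, (Fin.cons x fun k => f k a) ∈ S
    · exact hx.imp fun x hxS _ _ => hxS
    · exact ⟨Classical.arbitrary M, fun y hy => (hx ⟨y, hy⟩).elim⟩
  obtain ⟨g, hg, hgood⟩ := exists_definableFunOn_forall_rel hW hGood hexists
  exact ⟨g, hg, fun a ⟨x, hx⟩ => hgood a x hx⟩

end

/-- **Definable existential witnesses.** Let `M` be a nonempty `L`-structure admitting a
binary relation `W` that well-orders `M` and whose graph is definable without parameters.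
Let `A ⊆ M` be definable without parameters, let `φ` be an `L`-formula with free variables
`x, y₁, …, yₙ` (variable `0` playing the role of `x`), and let `f₁, …, fₙ : A → M` be
functions whose graphs are definable with parameters.  Then there is `g : A → M` with graph
definable with parameters such that for every `a ∈ A`, if some `x : M` satisfies
`φ (x, f₁ a, …, fₙ a)` in `M`, then `φ (g a, f₁ a, …, fₙ a)` holds in `M`. -/
theorem definable_existential_witness {L : FirstOrder.Language} {M : Type*}
    [L.Structure M] [Nonempty M] (W : M → M → Prop) (hWO : IsWellOrder M W)
    (hWdef : (∅ : Set M).Definable L {v : Fin 2 → M | W (v 0) (v 1)})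
    (A : Set M) (hA : (∅ : Set M).Definable₁ L A)
    {n : ℕ} (φ : L.Formula (Fin (n + 1))) (f : Fin n → A → M)
    (hf : ∀ k : Fin n, (Set.univ : Set M).Definable L
      {v : Fin 2 → M | ∃ h : v 0 ∈ A, f k ⟨v 0, h⟩ = v 1}) :
    ∃ g : A → M,
      (Set.univ : Set M).Definable L
        {v : Fin 2 → M | ∃ h : v 0 ∈ A, g ⟨v 0, h⟩ = v 1} ∧
      ∀ a : A, (∃ x : M, φ.Realize (Fin.cons x fun k => f k a)) →
        φ.Realize (Fin.cons (g a) fun k => f k a) := by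
  have hφ : (Set.univ : Set M).Definable L (Set.ofPred φ.Realize) :=
    (Set.empty_definable_iff.2 ⟨φ, rfl⟩).mono (Set.empty_subset _)
  obtain ⟨g, hg, hgφ⟩ := definable_existential_witness_general
    (hWdef.mono (Set.empty_subset _)) (Set.Definable.mono hA (Set.empty_subset _)) hφ
    fun k => definableFunOn_of_definable_unary_graph (hf k)
  exact ⟨fun a => g ⟨fun _ => a, a.2⟩, hg.definable_unary_graph, fun a => hgφ ⟨fun _ => a, a.2⟩⟩
end
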